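/- Let F be a field and let T : Fin p → Fin q → Fin r → F be an order-3 tensor with slices S_i = T(·,·,i) ∈ Mat_{p,q}(F), and suppose k is at least the tensor rank of T. For parameters a_1,…,a_k ∈ F^p, b_1,…,b_k ∈ F^q and λ_{i,j} ∈ F (1 ≤ i ≤ r, 1 ≤ j ≤ k), let E(a,b,λ) be the block-diagonal matrix diag( C_1, …, C_r, D_1, …, D_k ), where C_i = ( S_i , A , 0 ; 0 , I_k , −Λ_i ; Bᵀ , 0 , I_k ) with A the p×k matrix with columns a_1,…,a_k, B the q×k matrix with columns b_1,…,b_k, Λ_i = diag(λ_{i,1},…,λ_{i,k}), and where D_j ∈ F^{p+q} is the single-column matrix obtained by stacking a_j on top of b_j. Then the minimum of rank E(a,b,λ) over all choices of a, b, λ equals 2kr + (tensor rank of T). -/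

import Mathlib

/-- The tensor rank of an order-3 tensor `T : Fin p → Fin q → Fin r → F`: the least `l`
such that `T` is a sum of `l` pure tensors. -/
noncomputable def tensorRank3 (F : Type*) [Field F] (p q r : ℕ)
    (T : Fin p → Fin q → Fin r → F) : ℕ :=
  sInf {l : ℕ | ∃ (a : Fin l → Fin p → F) (b : Fin l → Fin q → F) (c : Fin l → Fin r → F),
    ∀ i j k, T i j k = ∑ u : Fin l, a u i * b u j * c u k}

/-- The block matrix `C = ( S , A , 0 ; 0 , I_k , -Λ ; Bᵀ , 0 , I_k )`, where `A` has
columns `a_1, …, a_k`, `B` has columns `b_1, …, b_k` and `Λ = diag(λ_1, …, λ_k)`. -/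
def Cblock (F : Type*) [Field F] (p q k : ℕ) (S : Matrix (Fin p) (Fin q) F)
    (a : Fin k → Fin p → F) (b : Fin k → Fin q → F) (lam : Fin k → F) :
    Matrix (Fin p ⊕ (Fin k ⊕ Fin k)) (Fin q ⊕ (Fin k ⊕ Fin k)) F :=
  Matrix.fromBlocks S
    (Matrix.of fun i (j : Fin k ⊕ Fin k) => Sum.elim (fun j' => a j' i) (fun _ => (0 : F)) j)
    (Matrix.of fun (i : Fin k ⊕ Fin k) j => Sum.elim (fun _ => (0 : F)) (fun i' => b i' j) i)
    (Matrix.fromBlocks 1 (-(Matrix.diagonal lam)) 0 1)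

/-- The block-diagonal matrix `E(a,b,λ) = diag( C_1, …, C_r, D_1, …, D_k )`, where
`C_i = ( S_i , A , 0 ; 0 , I_k , -Λ_i ; Bᵀ , 0 , I_k )` is built from the `i`-th slice
`S_i` of `T` and `Λ_i = diag(λ_{i,1}, …, λ_{i,k})`, and where `D_j` is the single column
obtained by stacking `a_j` on top of `b_j`. -/
def Emat (F : Type*) [Field F] (p q r k : ℕ) (T : Fin p → Fin q → Fin r → F)
    (a : Fin k → Fin p → F) (b : Fin k → Fin q → F) (lam : Fin r → Fin k → F) :
    Matrix (((Fin p ⊕ (Fin k ⊕ Fin k)) × Fin r) ⊕ ((Fin p ⊕ Fin q) × Fin k))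
           (((Fin q ⊕ (Fin k ⊕ Fin k)) × Fin r) ⊕ (Unit × Fin k)) F :=
  Matrix.fromBlocks
    (Matrix.blockDiagonal fun i : Fin r =>
      Cblock F p q k (Matrix.of fun x y => T x y i) a b (lam i))
    0 0
    (Matrix.blockDiagonal fun j : Fin k =>
      Matrix.of fun (rj : Fin p ⊕ Fin q) (_ : Unit) => Sum.elim (a j) (b j) rj)

/-!
The Schur complement of the trailing unitriangular `2k × 2k` block of `C_i` is
`S_i - ∑ j, λ_{i,j} a_j b_jᵀ`, the `i`-th slice of `T - P` for `P = ∑ j, a_j ⊗ b_j ⊗ λ_{·,j}`,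
while `D_j` has rank `1` unless `a_j` and `b_j` both vanish. So `rank E(a, b, λ) - 2kr` is the sum
of the ranks of the slices of `T - P` plus the number of nonzero pairs `(a_j, b_j)`. The first
summand bounds the tensor rank of `T - P`, the second that of `P`; conversely, a shortest
decomposition of `T`, padded by zeros to `k` terms, makes the first summand vanish.
-/

section LinearMap

theorem range_piMap_eq_pi {R ι : Type*} [Semiring R] {V W : ι → Type*} [∀ i, AddCommMonoid (V i)]
    [∀ i, Module R (V i)] [∀ i, AddCommMonoid (W i)] [∀ i, Module R (W i)]
    (f : ∀ i, V i →ₗ[R] W i) :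
    (LinearMap.piMap f).range = Submodule.pi Set.univ fun i ↦ (f i).range :=
  SetLike.coe_injective (Set.range_piMap fun i ↦ f i)

variable {K : Type*} [DivisionRing K]

theorem finrank_range_prodMap {V V' W W' : Type*} [AddCommGroup V] [Module K V] [AddCommGroup V']
    [Module K V'] [AddCommGroup W] [Module K W] [AddCommGroup W'] [Module K W']
    [Module.Finite K W] [Module.Finite K W'] (f : V →ₗ[K] W) (g : V' →ₗ[K] W') :
    Module.finrank K (f.prodMap g).range = Module.finrank K f.range + Module.finrank K g.range := by
  have range_eq : (f.prodMap g).range = (f.range.subtype.prodMap g.range.subtype).range := by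
    simp only [LinearMap.range_prodMap, Submodule.range_subtype]
  rw [range_eq, LinearMap.finrank_range_of_inj, Module.finrank_prod]
  exact Subtype.val_injective.prodMap Subtype.val_injective

theorem finrank_range_piMap {ι : Type*} [Fintype ι] {V W : ι → Type*} [∀ i, AddCommGroup (V i)]
    [∀ i, Module K (V i)] [∀ i, AddCommGroup (W i)] [∀ i, Module K (W i)]
    [∀ i, Module.Finite K (W i)] (f : ∀ i, V i →ₗ[K] W i) :
    Module.finrank K (LinearMap.piMap f).range = ∑ i, Module.finrank K (f i).range := by
  have range_eq :
      (LinearMap.piMap f).range = (LinearMap.piMap fun i ↦ (f i).range.subtype).range := by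
    simp only [range_piMap_eq_pi, Submodule.range_subtype]
  rw [range_eq, LinearMap.finrank_range_of_inj, Module.finrank_pi_fintype]
  exact Function.Injective.piMap fun _ ↦ Subtype.val_injective

end LinearMap

section Matrix

open Matrix

variable {F m n l o : Type*} [Field F]

theorem rank_fromBlocks_zero_zero [Finite m] [Fintype n] [Finite l] [Fintype o] (A : Matrix m n F)
    (D : Matrix l o F) : (fromBlocks A 0 0 D).rank = A.rank + D.rank := by
  have conj : (fromBlocks A 0 0 D).mulVecLin =
      (LinearEquiv.sumArrowLequivProdArrow m l F F).symm.toLinearMap ∘ₗ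
        A.mulVecLin.prodMap D.mulVecLin ∘ₗ
        (LinearEquiv.sumArrowLequivProdArrow n o F F).toLinearMap := by
    refine LinearMap.ext fun x ↦ (fromBlocks_mulVec A 0 0 D x).trans ?_
    simp only [zero_mulVec, add_zero, zero_add]
    rfl
  rw [rank, conj, LinearMap.range_comp, LinearEquiv.finrank_map_eq, LinearEquiv.range_comp,
    finrank_range_prodMap, rank, rank]

theorem rank_blockDiagonal' {m n : o → Type*} [∀ i, Finite (m i)] [∀ i, Fintype (n i)] [Fintype o]
    [DecidableEq o] (A : ∀ i, Matrix (m i) (n i) F) :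
    (blockDiagonal' A).rank = ∑ i, (A i).rank := by
  have conj : (blockDiagonal' A).mulVecLin =
      (LinearEquiv.piCurry F fun i (_ : m i) ↦ F).symm.toLinearMap ∘ₗ
        LinearMap.piMap (fun i ↦ (A i).mulVecLin) ∘ₗ
        (LinearEquiv.piCurry F fun i (_ : n i) ↦ F).toLinearMap := by
    refine LinearMap.ext fun x ↦ funext fun ⟨i, j⟩ ↦ ?_
    calc (blockDiagonal' A).mulVecLin x ⟨i, j⟩
        = ∑ k, ∑ v, blockDiagonal' A ⟨i, j⟩ ⟨k, v⟩ * x ⟨k, v⟩ := Fintype.sum_sigma _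
      _ = ∑ v, A i j v * x ⟨i, v⟩ := by
        rw [Fintype.sum_eq_single i fun k hk ↦ by simp [blockDiagonal'_apply_ne A _ _ hk.symm]]
        simp only [blockDiagonal'_apply_eq]
  rw [rank, conj, LinearMap.range_comp, LinearEquiv.finrank_map_eq, LinearEquiv.range_comp,
    finrank_range_piMap]
  rfl

theorem rank_blockDiagonal [Finite m] [Fintype n] [Fintype o] [DecidableEq o]
    (A : o → Matrix m n F) : (blockDiagonal A).rank = ∑ i, (A i).rank := by
  rw [← rank_blockDiagonal', ← blockDiagonal'_submatrix_eq_blockDiagonal]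
  exact rank_submatrix _ ((Equiv.prodComm m o).trans (Equiv.sigmaEquivProd o m).symm)
    ((Equiv.prodComm n o).trans (Equiv.sigmaEquivProd o n).symm)

theorem rank_fromBlocks₂₂ [Fintype m] [Fintype n] [DecidableEq n] [Finite l] (A : Matrix l m F)
    (B : Matrix l n F) (C : Matrix n m F) (D : Matrix n n F) [Invertible D] :
    (fromBlocks A B C D).rank = Fintype.card n + (A - B * ⅟D * C).rank := by
  classical
  have := Fintype.ofFinite l
  rw [fromBlocks_eq_of_invertible₂₂, rank_mul_eq_left_of_isUnit_det _ _ (by simp),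
    rank_mul_eq_right_of_isUnit_det _ _ (by simp), rank_fromBlocks_zero_zero,
    rank_of_isUnit D (isUnit_of_invertible D), add_comm]

theorem exists_eq_mul_rank [Finite m] [Fintype n] (M : Matrix m n F) :
    ∃ (X : Matrix m (Fin M.rank) F) (Y : Matrix (Fin M.rank) n F), M = X * Y := by
  classical
  let e : M.mulVecLin.range ≃ₗ[F] Fin M.rank → F :=
    (Module.finBasis F M.mulVecLin.range).equivFun
  refine ⟨LinearMap.toMatrix' (M.mulVecLin.range.subtype ∘ₗ e.symm.toLinearMap),
    LinearMap.toMatrix' (e.toLinearMap ∘ₗ M.mulVecLin.rangeRestrict), ?_⟩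
  have factor : (M.mulVecLin.range.subtype ∘ₗ e.symm.toLinearMap) ∘ₗ
      (e.toLinearMap ∘ₗ M.mulVecLin.rangeRestrict) = M.mulVecLin := by
    ext; simp
  rw [← LinearMap.toMatrix'_comp, factor]
  exact (LinearMap.toMatrix'_toLin' M).symm

theorem rank_replicateCol_unit [Finite m] (v : m → F) [Decidable (v = 0)] :
    (replicateCol Unit v).rank = if v = 0 then 0 else 1 := by
  split_ifs with hv
  · rw [hv, replicateCol_zero, rank_zero]
  · have := Fintype.ofFinite m
    rw [← rank_transpose, transpose_replicateCol]
    exact LinearIndependent.rank_matrix (LinearIndependent.of_subsingleton () hv)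

end Matrix

section TensorRank

open Matrix

variable {F ι κ α β γ : Type*}

/-- The sum `∑ u, a_u ⊗ b_u ⊗ c_u` of pure tensors, as a function of three indices. -/
def pureSum [CommSemiring F] [Fintype ι] (a : ι → α → F) (b : ι → β → F) (c : ι → γ → F) :
    α → β → γ → F :=
  fun i j k ↦ ∑ u, a u i * b u j * c u k

/-- The slice `T(·,·,k)` of an order-3 tensor `T`, as a matrix. -/
def slice (T : α → β → γ → F) (k : γ) : Matrix α β F :=
  of fun i j ↦ T i j k

theorem slice_pureSum [CommSemiring F] [Fintype ι] [DecidableEq ι] (a : ι → α → F) (b : ι → β → F)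
    (c : ι → γ → F) (k : γ) :
    slice (pureSum a b c) k = (of a)ᵀ * diagonal (fun u ↦ c u k) * of b := by
  ext i j
  rw [mul_apply]
  simp [slice, pureSum, mul_diagonal, mul_right_comm]

theorem pureSum_sumElim [CommSemiring F] [Fintype ι] [Fintype κ] (a : ι → α → F) (b : ι → β → F)
    (c : ι → γ → F) (a' : κ → α → F) (b' : κ → β → F) (c' : κ → γ → F) :
    pureSum (Sum.elim a a') (Sum.elim b b') (Sum.elim c c') =
      pureSum a b c + pureSum a' b' c' := by
  ext i j k
  simp [pureSum]

theorem pureSum_comp_val [CommSemiring F] [Fintype ι] {a : ι → α → F} {s : Finset ι}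
    (hs : ∀ u ∉ s, a u = 0) (b : ι → β → F) (c : ι → γ → F) :
    pureSum (fun u : s ↦ a u) (fun u : s ↦ b u) (fun u : s ↦ c u) = pureSum a b c := by
  ext i j k
  rw [pureSum, Finset.sum_coe_sort s fun u ↦ a u i * b u j * c u k]
  exact Finset.sum_subset s.subset_univ fun u _ hu ↦ by simp [hs u hu]

theorem pureSum_extend [CommSemiring F] [Fintype ι] [Fintype κ] {e : ι → κ}
    (he : Function.Injective e) (a : ι → α → F) (b : ι → β → F) (c : ι → γ → F) :
    pureSum (Function.extend e a 0) (Function.extend e b 0) (Function.extend e c 0) =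
      pureSum a b c := by
  ext i j k
  refine (Fintype.sum_of_injective e he _ _ (fun u hu ↦ ?_) fun u ↦ ?_).symm
  · rw [Function.extend_apply' _ _ _ hu]; simp
  · simp only [he.extend_apply]

theorem exists_eq_pureSum [Field F] [Finite α] [Fintype β] [Fintype γ] (T : α → β → γ → F) :
    ∃ (a : (Σ k, Fin (slice T k).rank) → α → F) (b : (Σ k, Fin (slice T k).rank) → β → F)
      (c : (Σ k, Fin (slice T k).rank) → γ → F), T = pureSum a b c := by
  classical
  choose X Y h using fun k ↦ exists_eq_mul_rank (slice T k)
  refine ⟨fun u i ↦ X u.1 i u.2, fun u ↦ Y u.1 u.2, fun u ↦ Pi.single u.1 1, ?_⟩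
  ext i j k
  calc T i j k = (X k * Y k) i j := congr_fun₂ (h k) i j
    _ = ∑ k', if k = k' then (X k' * Y k') i j else 0 := by simp
    _ = _ := by simp [pureSum, Fintype.sum_sigma, Pi.single_apply, mul_apply]

variable [Field F] {p q r : ℕ}

theorem tensorRank3_pureSum_le_card [Fintype ι] (a : ι → Fin p → F) (b : ι → Fin q → F)
    (c : ι → Fin r → F) : tensorRank3 F p q r (pureSum a b c) ≤ Fintype.card ι := by
  let e := (Fintype.equivFin ι).symm
  exact Nat.sInf_le ⟨a ∘ e, b ∘ e, c ∘ e, fun i j k ↦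
    (e.sum_comp fun u ↦ a u i * b u j * c u k).symm⟩

theorem tensorRank3_le_sum_rank_slice (T : Fin p → Fin q → Fin r → F) :
    tensorRank3 F p q r T ≤ ∑ k, (slice T k).rank := by
  obtain ⟨a, b, c, hT⟩ := exists_eq_pureSum T
  calc tensorRank3 F p q r T = tensorRank3 F p q r (pureSum a b c) := congrArg _ hT
    _ ≤ _ := (tensorRank3_pureSum_le_card a b c).trans_eq (by simp)

theorem exists_eq_pureSum_tensorRank3 (T : Fin p → Fin q → Fin r → F) :
    ∃ (a : Fin (tensorRank3 F p q r T) → Fin p → F) (b : Fin (tensorRank3 F p q r T) → Fin q → F)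
      (c : Fin (tensorRank3 F p q r T) → Fin r → F), T = pureSum a b c := by
  obtain ⟨a, b, c, hT⟩ := exists_eq_pureSum T
  let e := (Fintype.equivFin (Σ k, Fin (slice T k).rank)).symm
  have sum_eq (i j k) : T i j k = ∑ u, a (e u) i * b (e u) j * c (e u) k :=
    (congr_fun₃ hT i j k).trans (e.sum_comp fun u ↦ a u i * b u j * c u k).symm
  obtain ⟨a', b', c', hT'⟩ : tensorRank3 F p q r T ∈ {l | ∃ (a : Fin l → Fin p → F)
      (b : Fin l → Fin q → F) (c : Fin l → Fin r → F), ∀ i j k, T i j k = pureSum a b c i j k} :=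
    Nat.sInf_mem ⟨_, a ∘ e, b ∘ e, c ∘ e, sum_eq⟩
  exact ⟨a', b', c', funext₃ hT'⟩

theorem tensorRank3_add_le (T T' : Fin p → Fin q → Fin r → F) :
    tensorRank3 F p q r (T + T') ≤ tensorRank3 F p q r T + tensorRank3 F p q r T' := by
  obtain ⟨a, b, c, hT⟩ := exists_eq_pureSum_tensorRank3 T
  obtain ⟨a', b', c', hT'⟩ := exists_eq_pureSum_tensorRank3 T'
  calc tensorRank3 F p q r (T + T')
      = tensorRank3 F p q r (pureSum (Sum.elim a a') (Sum.elim b b') (Sum.elim c c')) := by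
        rw [pureSum_sumElim, ← hT, ← hT']
    _ ≤ _ := (tensorRank3_pureSum_le_card _ _ _).trans_eq (by simp)

theorem tensorRank3_pureSum_le_card_of_forall_notMem [Fintype ι] {a : ι → Fin p → F} {s : Finset ι}
    (hs : ∀ u ∉ s, a u = 0) (b : ι → Fin q → F) (c : ι → Fin r → F) :
    tensorRank3 F p q r (pureSum a b c) ≤ s.card := by
  rw [← pureSum_comp_val hs]
  exact (tensorRank3_pureSum_le_card _ _ _).trans_eq (Fintype.card_coe s)

end TensorRank

section Emat

open Matrix
open scoped Finset

variable {F : Type*} [Field F] {p q r k : ℕ}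

theorem rank_Cblock (S : Matrix (Fin p) (Fin q) F) (a : Fin k → Fin p → F) (b : Fin k → Fin q → F)
    (lam : Fin k → F) :
    (Cblock F p q k S a b lam).rank = 2 * k + (S - (of a)ᵀ * diagonal lam * of b).rank := by
  have Cblock_eq : Cblock F p q k S a b lam =
      fromBlocks S (fromCols (of a)ᵀ 0) (fromRows 0 (of b))
        (fromBlocks 1 (-diagonal lam) 0 1) := by
    refine congrArg₂ (fromBlocks S · · _) ?_ ?_
    · ext _ (_ | _) <;> rfl
    · ext (_ | _) _ <;> rfl
  let : Invertible (1 : Matrix (Fin k) (Fin k) F) := invertibleOne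
  let := fromBlocksZero₂₁Invertible (1 : Matrix (Fin k) (Fin k) F) (-diagonal lam)
    (1 : Matrix (Fin k) (Fin k) F)
  rw [Cblock_eq, rank_fromBlocks₂₂, invOf_fromBlocks_zero₂₁_eq]
  congr 1
  · simp [two_mul]
  · simp [fromCols_mul_fromBlocks, fromCols_mul_fromRows]

theorem rank_Emat [DecidableEq F] (T : Fin p → Fin q → Fin r → F) (a : Fin k → Fin p → F)
    (b : Fin k → Fin q → F) (lam : Fin r → Fin k → F) :
    (Emat F p q r k T a b lam).rank = 2 * k * r +
      (∑ i, (slice (T - pureSum a b fun j i ↦ lam i j) i).rank +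
        #{j | Sum.elim (a j) (b j) ≠ 0}) := by
  have rank_C (i : Fin r) : (Cblock F p q k (slice T i) a b (lam i)).rank =
      2 * k + (slice (T - pureSum a b fun j i ↦ lam i j) i).rank := by
    rw [rank_Cblock, ← slice_pureSum a b (fun j i ↦ lam i j)]
    rfl
  calc (Emat F p q r k T a b lam).rank
      = ∑ i, (Cblock F p q k (slice T i) a b (lam i)).rank +
          ∑ j, (replicateCol Unit (Sum.elim (a j) (b j))).rank := by
        rw [← rank_blockDiagonal, ← rank_blockDiagonal, ← rank_fromBlocks_zero_zero]
        rfl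
    _ = _ := by
        rw [Finset.card_filter]
        simp only [rank_C, rank_replicateCol_unit, Finset.sum_add_distrib, ite_not,
          Finset.sum_const, Finset.card_univ, Fintype.card_fin, smul_eq_mul]
        ring

theorem le_rank_Emat (T : Fin p → Fin q → Fin r → F) (a : Fin k → Fin p → F) (b : Fin k → Fin q → F)
    (lam : Fin r → Fin k → F) :
    2 * k * r + tensorRank3 F p q r T ≤ (Emat F p q r k T a b lam).rank := by
  classical
  let P : Fin p → Fin q → Fin r → F := pureSum a b fun j i ↦ lam i j
  have a_eq_zero : ∀ j ∉ ({j | Sum.elim (a j) (b j) ≠ 0} : Finset (Fin k)), a j = 0 := by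
    intro j hj
    have : Sum.elim (a j) (b j) = 0 := by simpa using hj
    exact congrArg (· ∘ Sum.inl) this
  rw [rank_Emat]
  gcongr
  calc tensorRank3 F p q r T = tensorRank3 F p q r (T - P + P) := by rw [sub_add_cancel]
    _ ≤ tensorRank3 F p q r (T - P) + tensorRank3 F p q r P := tensorRank3_add_le _ _
    _ ≤ _ := add_le_add (tensorRank3_le_sum_rank_slice _)
        (tensorRank3_pureSum_le_card_of_forall_notMem a_eq_zero _ _)

theorem exists_rank_Emat_eq (T : Fin p → Fin q → Fin r → F) (hk : tensorRank3 F p q r T ≤ k) :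
    ∃ (a : Fin k → Fin p → F) (b : Fin k → Fin q → F) (lam : Fin r → Fin k → F),
      (Emat F p q r k T a b lam).rank = 2 * k * r + tensorRank3 F p q r T := by
  classical
  obtain ⟨a, b, c, hT⟩ := exists_eq_pureSum_tensorRank3 T
  let e := Fin.castLE hk
  have he : Function.Injective e := Fin.castLE_injective hk
  refine ⟨Function.extend e a 0, Function.extend e b 0, fun i j ↦ Function.extend e c 0 j i,
    le_antisymm ?_ (le_rank_Emat _ _ _ _)⟩
  have support_subset : ({j | Sum.elim (Function.extend e a 0 j) (Function.extend e b 0 j) ≠ 0} :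
      Finset (Fin k)) ⊆ Finset.univ.image e := by
    intro j hj
    by_contra hje
    have hje' : ¬∃ u, e u = j := by simpa using hje
    simp [Function.extend_apply' _ _ _ hje'] at hj
  rw [rank_Emat, pureSum_extend he a b c, ← hT, sub_self]
  have rank_slice_zero (i : Fin r) : (slice (0 : Fin p → Fin q → Fin r → F) i).rank = 0 := rank_zero
  simp only [rank_slice_zero, Finset.sum_const_zero, zero_add]
  gcongr
  calc #{j | Sum.elim (Function.extend e a 0 j) (Function.extend e b 0 j) ≠ 0}
      ≤ #(Finset.univ.image e) := Finset.card_le_card support_subset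
    _ ≤ _ := Finset.card_image_le.trans_eq (Finset.card_fin _)

end Emat

/-- If `k` is at least the tensor rank of `T`, then the minimum of
`rank E(a,b,λ)` over all choices of the parameters `a`, `b`, `λ` equals `2kr` plus the
tensor rank of `T`, where `E(a,b,λ) = diag( C_1, …, C_r, D_1, …, D_k )`. -/
theorem sInf_rank_Emat_eq
    (F : Type*) [Field F] (p q r k : ℕ) (T : Fin p → Fin q → Fin r → F)
    (hk : tensorRank3 F p q r T ≤ k) :
    sInf {d : ℕ | ∃ (a : Fin k → Fin p → F) (b : Fin k → Fin q → F) (lam : Fin r → Fin k → F),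
        (Emat F p q r k T a b lam).rank = d}
      = 2 * k * r + tensorRank3 F p q r T := by
  refine IsLeast.csInf_eq ⟨exists_rank_Emat_eq T hk, ?_⟩
  rintro _ ⟨a, b, lam, rfl⟩
  exact le_rank_Emat T a b lam
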